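/- arXiv:1605.04100 — 2 statements merged into one kernel-verified Lean document; each statement's English description precedes it below -/
import Mathlib

section
/- Let X be a finite-dimensional strictly convex normed linear space. If A is a nonempty bounded subset of X that is uniquely remotal, then A is a singleton. -/
open Filter Topology

/-- The farthest distance of `x` from the set `A`: `D(x,A) = sup_{a ∈ A} ‖x - a‖`. -/
noncomputable def farDist {X : Type*} [NormedAddCommGroup X] (x : X) (A : Set X) : ℝ :=
  sSup ((fun a => ‖x - a‖) '' A)

/-- `F(x,A) = {a ∈ A : ‖x - a‖ = D(x,A)}`, the farthest points of `A` from `x`. -/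
def farPoints {X : Type*} [NormedAddCommGroup X] (x : X) (A : Set X) : Set X :=
  {a ∈ A | ‖x - a‖ = farDist x A}

/-- `A` is remotal if `F(x,A)` is nonempty for every `x`. -/
def Remotal {X : Type*} [NormedAddCommGroup X] (A : Set X) : Prop :=
  ∀ x : X, (farPoints x A).Nonempty

/-- `A` is uniquely remotal if `F(x,A)` is a singleton for every `x`. -/
def UniquelyRemotal {X : Type*} [NormedAddCommGroup X] (A : Set X) : Prop :=
  ∀ x : X, ∃ a : X, farPoints x A = {a}

/-- A sequence in `S` is maximizing if `‖x - a n‖ → D(x,S)` for some `x ∈ X`. -/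
def MaximizingSeq {X : Type*} [NormedAddCommGroup X] (S : Set X) (a : ℕ → X) : Prop :=
  (∀ n, a n ∈ S) ∧ ∃ x : X, Tendsto (fun n => ‖x - a n‖) atTop (𝓝 (farDist x S))

/-- `S` is M-compact if every maximizing sequence in `S` has a subsequence converging in `X`. -/
def MCompact {X : Type*} [NormedAddCommGroup X] (S : Set X) : Prop :=
  ∀ a : ℕ → X, MaximizingSeq S a →
    ∃ (φ : ℕ → ℕ) (l : X), StrictMono φ ∧ Tendsto (a ∘ φ) atTop (𝓝 l)

/-- `Far(A) = {a ∈ A : a ∈ F(x,A) for some x ∈ X}`. -/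
def farSet {X : Type*} [NormedAddCommGroup X] (A : Set X) : Set X :=
  {a : X | ∃ x : X, a ∈ farPoints x A}

-- We use Mathlib's `derivedSet A = {x | AccPt x (𝓟 A)}` for the set of limit points.

section FarDist

variable {X : Type*} [NormedAddCommGroup X] {A : Set X}

theorem norm_sub_le_farDist (hbd : Bornology.IsBounded A) (x : X) {a : X} (ha : a ∈ A) :
    ‖x - a‖ ≤ farDist x A := by
  refine le_csSup ?_ ⟨a, ha, rfl⟩
  obtain ⟨C, hC⟩ := hbd.exists_norm_le
  refine ⟨‖x‖ + C, ?_⟩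
  rintro _ ⟨b, hb, rfl⟩
  exact (norm_sub_le x b).trans (by gcongr; exact hC b hb)

theorem farDist_le (hne : A.Nonempty) {x : X} {r : ℝ} (h : ∀ a ∈ A, ‖x - a‖ ≤ r) :
    farDist x A ≤ r := by
  refine csSup_le (hne.image _) ?_
  rintro _ ⟨a, ha, rfl⟩
  exact h a ha

theorem norm_sub_le_farDist_of_mem_closure (hbd : Bornology.IsBounded A) (x : X) {a : X}
    (ha : a ∈ closure A) : ‖x - a‖ ≤ farDist x A :=
  closure_minimal (t := {a | ‖x - a‖ ≤ farDist x A})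
    (fun _ hb => norm_sub_le_farDist hbd x hb)
    (isClosed_le (by fun_prop) continuous_const) ha

theorem farDist_le_add_norm_sub (hne : A.Nonempty) (hbd : Bornology.IsBounded A) (x y : X) :
    farDist x A ≤ farDist y A + ‖x - y‖ := by
  refine farDist_le hne fun a ha => ?_
  have h₁ := norm_sub_le_norm_sub_add_norm_sub x y a
  have h₂ := norm_sub_le_farDist hbd y ha
  linarith

theorem continuous_farDist (hne : A.Nonempty) (hbd : Bornology.IsBounded A) :
    Continuous fun x => farDist x A := by
  refine (LipschitzWith.of_le_add fun x y => ?_).continuous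
  rw [dist_eq_norm]
  exact farDist_le_add_norm_sub hne hbd x y

/-- A bounded nonempty set in a proper space has a Chebyshev centre. -/
theorem exists_forall_farDist_le [ProperSpace X] (hne : A.Nonempty)
    (hbd : Bornology.IsBounded A) : ∃ c : X, ∀ x, farDist c A ≤ farDist x A := by
  obtain ⟨a, ha⟩ := hne
  have : Nonempty X := ⟨a⟩
  refine (continuous_farDist ⟨a, ha⟩ hbd).exists_forall_le ?_
  refine tendsto_atTop_mono (fun x => ?_) (tendsto_dist_left_cocompact_atTop a)
  rw [dist_comm, dist_eq_norm]
  exact norm_sub_le_farDist hbd x ha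

theorem UniquelyRemotal.remotal (h : UniquelyRemotal A) : Remotal A := fun x => by
  obtain ⟨a, ha⟩ := h x
  exact ⟨a, ha ▸ rfl⟩

/-- In a strictly convex space, a remotal set contains every point of its closure that is
farthest from some point. -/
theorem Remotal.mem_of_mem_closure [NormedSpace ℝ X] [StrictConvexSpace ℝ X] (hr : Remotal A)
    (hbd : Bornology.IsBounded A) {x b : X} (hb : b ∈ closure A)
    (hxb : ‖x - b‖ = farDist x A) : b ∈ A := by
  obtain ⟨a, ha, hfar⟩ := hr (x + (x - b))
  have hle := norm_sub_le_farDist_of_mem_closure hbd (x + (x - b)) hb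
  have hdouble : ‖x + (x - b) - b‖ = 2 * ‖x - b‖ := by
    rw [show x + (x - b) - b = (2 : ℝ) • (x - b) by rw [two_smul]; abel, norm_smul]
    simp
  have hsplit : x + (x - b) - a = (x - b) + (x - a) := by abel
  have htri := norm_add_le (x - b) (x - a)
  have hxa := norm_sub_le_farDist hbd x ha
  rw [hsplit] at hfar
  have heq : x - b = x - a := eq_of_norm_eq_of_norm_add_eq (by linarith) (by linarith)
  rwa [sub_right_injective heq]

/-- If `c` is a Chebyshev centre of `A` and `a` is farthest from a point of the segment from `c`
to `b` other than `c`, then `a` is at least the Chebyshev radius away from `b`. -/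
theorem farDist_le_norm_sub_of_mem_farPoints [NormedSpace ℝ X] (hbd : Bornology.IsBounded A)
    {a b c : X} (hc : ∀ x, farDist c A ≤ farDist x A) {t : ℝ} (ht₀ : 0 < t) (ht₁ : t ≤ 1)
    (ha : a ∈ farPoints (c + t • (b - c)) A) : farDist c A ≤ ‖b - a‖ := by
  have hca := norm_sub_le_farDist hbd c ha.1
  have hge : farDist c A ≤ ‖c + t • (b - c) - a‖ := ha.2 ▸ hc _
  have hle : ‖c + t • (b - c) - a‖ ≤ (1 - t) * ‖c - a‖ + t * ‖b - a‖ := by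
    rw [show c + t • (b - c) - a = (1 - t) • (c - a) + t • (b - a) by module]
    refine (norm_add_le _ _).trans_eq ?_
    rw [norm_smul, norm_smul, Real.norm_of_nonneg ht₀.le, Real.norm_of_nonneg (by linarith)]
  have hmul := mul_le_mul_of_nonneg_left hca (sub_nonneg.2 ht₁)
  exact le_of_mul_le_mul_left (by linarith) ht₀

end FarDist

theorem stmt_1 {X : Type*} [NormedAddCommGroup X] [NormedSpace ℝ X] [StrictConvexSpace ℝ X]
    [FiniteDimensional ℝ X]
    (A : Set X) (hne : A.Nonempty) (hbd : Bornology.IsBounded A)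
    (hur : UniquelyRemotal A) : ∃ a : X, A = {a} := by
  have : ProperSpace X := FiniteDimensional.proper ℝ X
  obtain ⟨c, hc⟩ := exists_forall_farDist_le hne hbd
  obtain ⟨b, hb⟩ := hur c
  let t : ℕ → ℝ := fun n => 1 / ((n : ℝ) + 1)
  have ht : Tendsto t atTop (𝓝 0) := tendsto_one_div_add_atTop_nhds_zero_nat
  choose a ha using fun n => hur.remotal (c + t n • (b - c))
  have hba : ∀ n, farDist c A ≤ ‖b - a n‖ := fun n =>
    farDist_le_norm_sub_of_mem_farPoints hbd hc Nat.one_div_pos_of_nat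
      ((div_le_one (by positivity)).2 (by simp)) (ha n)
  obtain ⟨l, hl, φ, hφ, hlim⟩ := tendsto_subseq_of_bounded hbd fun n => (ha n).1
  have hlow : farDist c A ≤ ‖c - l‖ := by
    have hx : Tendsto (fun n => c + t (φ n) • (b - c)) atTop (𝓝 c) := by
      simpa using ((ht.comp hφ.tendsto_atTop).smul_const (b - c)).const_add c
    refine ge_of_tendsto' (hx.sub hlim).norm fun n => ?_
    exact (hc _).trans_eq (ha (φ n)).2.symm
  have hfar : ‖c - l‖ = farDist c A :=
    (norm_sub_le_farDist_of_mem_closure hbd c hl).antisymm hlow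
  have hlb : l = b := by
    have hlF : l ∈ farPoints c A := ⟨hur.remotal.mem_of_mem_closure hbd hl hfar, hfar⟩
    rwa [hb] at hlF
  have hzero : farDist c A ≤ 0 := by
    have h := ge_of_tendsto' (hlim.const_sub b).norm fun n => hba (φ n)
    simpa [hlb] using h
  refine ⟨c, hne.subset_singleton_iff.1 fun x hx => ?_⟩
  have hx₀ := (norm_sub_le_farDist hbd c hx).trans hzero
  exact (sub_eq_zero.1 (norm_le_zero_iff.1 hx₀)).symm
end

section
/- Let X be a strictly convex normed linear space and let A be a nonempty bounded subset of X. If A is uniquely remotal and the closure of A is M-compact, then A itself is M-compact. -/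
open Filter Topology

-- We use Mathlib's `derivedSet A = {x | AccPt x (𝓟 A)}` for the set of limit points.

theorem farDist_closure {X : Type*} [NormedAddCommGroup X] (x : X) {A : Set X}
    (hne : A.Nonempty) (hbd : Bornology.IsBounded A) :
    farDist x (closure A) = farDist x A := by
  have hcont : Continuous fun a : X => ‖x - a‖ := by fun_prop
  have hbdd : BddAbove ((fun a => ‖x - a‖) '' A) := by
    obtain ⟨C, hC⟩ := hbd.exists_norm_le
    refine ⟨‖x‖ + C, ?_⟩
    rintro _ ⟨a, ha, rfl⟩
    exact (norm_sub_le x a).trans (by gcongr; exact hC a ha)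
  have hle : ∀ b ∈ closure A, ‖x - b‖ ≤ farDist x A := fun b hb =>
    closure_minimal (fun a ha => le_csSup hbdd ⟨a, ha, rfl⟩)
      (isClosed_le hcont continuous_const) hb
  apply le_antisymm
  · refine csSup_le (hne.closure.image _) ?_
    rintro _ ⟨b, hb, rfl⟩
    exact hle b hb
  · refine csSup_le_csSup ⟨farDist x A, ?_⟩ (hne.image _) (Set.image_mono subset_closure)
    rintro _ ⟨b, hb, rfl⟩
    exact hle b hb

theorem stmt_2 {X : Type*} [NormedAddCommGroup X] [NormedSpace ℝ X] [StrictConvexSpace ℝ X]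
    (A : Set X) (hne : A.Nonempty) (hbd : Bornology.IsBounded A)
    (hur : UniquelyRemotal A) (hM : MCompact (closure A)) : MCompact A := by
  rintro a ⟨ha, x, hx⟩
  exact hM a ⟨fun n => subset_closure (ha n), x, by rwa [farDist_closure x hne hbd]⟩
end
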